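/- For every γ ≥ 0, every real p ≥ 3 and every finitely supported real sequence x = (x_i), one has ‖x‖_{ℓ^p} ≤ e^{−γp} ‖x‖_{ℓ^2} + e^{6γ} ‖x‖_{ℓ^∞}, where ‖x‖_{ℓ^p} = (Σ_i |x_i|^p)^{1/p}, ‖x‖_{ℓ^2} = (Σ_i x_i²)^{1/2} and ‖x‖_{ℓ^∞} = max_i |x_i|. -/

import Mathlib

open MeasureTheory ProbabilityTheory Finset
open scoped Classical

/-- `‖X‖_p = (E|X|^p)^{1/p}`. -/
noncomputable def mom {Ω : Type*} [MeasurableSpace Ω] (μ : Measure Ω) (p : ℝ) (X : Ω → ℝ) : ℝ :=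
  (∫ ω, |X ω| ^ p ∂μ) ^ (1 / p)

/-- A real random variable is symmetric if `X` and `-X` have the same law. -/
def IsSymmRV {Ω : Type*} [MeasurableSpace Ω] (μ : Measure Ω) (X : Ω → ℝ) : Prop :=
  μ.map X = μ.map (fun ω => -X ω)

/-- `X` has logarithmically convex tails: `t ↦ -log P(|X| ≥ t)` is convex on `[0,∞)`. -/
def HasLogConvexTails {Ω : Type*} [MeasurableSpace Ω] (μ : Measure Ω) (X : Ω → ℝ) : Prop :=
  ConvexOn ℝ (Set.Ici (0 : ℝ)) (fun t => -Real.log (μ {ω | t ≤ |X ω|}).toReal)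

/-- The family of all partitions of `I` into nonempty pairwise disjoint subsets. -/
noncomputable def partitionsOf {d : ℕ} (I : Finset (Fin d)) :
    Finset (Finset (Finset (Fin d))) :=
  Finset.univ.filter (fun J => (∀ A ∈ J, A.Nonempty) ∧
    (∀ A ∈ J, ∀ B ∈ J, A ≠ B → Disjoint A B) ∧ J.sup id = I)

/-- `‖(a_𝐢)_{𝐢_I}‖_𝒥` where `𝒥 = J` is a partition of `I = J.sup id`, the coordinates of the
multiindex outside `I` being fixed to agree with `z`:  the supremum of
`Σ_{𝐢_I} a_𝐢 ∏_{A ∈ 𝒥} x_A(𝐢_A)` over arrays `x_A` with `Σ_{𝐢_A} x_A(𝐢_A)² ≤ 1`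
(an array indexed by `𝐢_A` is encoded as a function of a full multiindex pinned to `0`
outside `A`). -/
noncomputable def partNorm {n d : ℕ} [NeZero n] (a : (Fin d → Fin n) → ℝ)
    (J : Finset (Finset (Fin d))) (z : Fin d → Fin n) : ℝ :=
  sSup { s : ℝ | ∃ x : Finset (Fin d) → (Fin d → Fin n) → ℝ,
    (∀ A ∈ J, ∑ y ∈ Finset.univ.filter (fun y : Fin d → Fin n => ∀ k, k ∉ A → y k = 0),
        (x A y) ^ 2 ≤ 1) ∧
    s = ∑ i ∈ Finset.univ.filter (fun i : Fin d → Fin n => ∀ k, k ∉ J.sup id → i k = z k),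
        a i * ∏ A ∈ J, x A (fun k => if k ∈ A then i k else 0) }

/-- Multiindices `𝐢_I` (choices of coordinates indexed by `I`), encoded as full multiindices
pinned to `0` outside `I`. -/
noncomputable def tuplesOn {n d : ℕ} [NeZero n] (I : Finset (Fin d)) :
    Finset (Fin d → Fin n) :=
  Finset.univ.filter (fun z => ∀ k, k ∉ I → z k = 0)

/-- Log-convexity of the `ℓ^p` norms between `ℓ^2` and `ℓ^∞`, with `M` a bound for the sequence. -/
theorem lp_le_l2_rpow_mul_bound_rpow {ι : Type*} [Fintype ι] (x : ι → ℝ) {p M : ℝ} (hp : 2 ≤ p)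
    (hM : 0 ≤ M) (hx : ∀ i, |x i| ≤ M) :
    (∑ i, |x i| ^ p) ^ (1 / p) ≤ √(∑ i, (x i) ^ 2) ^ (2 / p) * M ^ (1 - 2 / p) := by
  have hp0 : 0 < p := by linarith
  have hS : 0 ≤ ∑ i, (x i) ^ 2 := Finset.sum_nonneg fun i _ => sq_nonneg _
  have hsum : ∑ i, |x i| ^ p ≤ (∑ i, (x i) ^ 2) * M ^ (p - 2) := by
    rw [Finset.sum_mul]
    refine Finset.sum_le_sum fun i _ => ?_
    have hsplit : |x i| ^ p = (x i) ^ 2 * |x i| ^ (p - 2) := by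
      rw [← sq_abs (x i), ← Real.rpow_natCast, ← Real.rpow_add' (abs_nonneg _)] <;>
        norm_num
      exact hp0.ne'
    rw [hsplit]
    exact mul_le_mul_of_nonneg_left
      (Real.rpow_le_rpow (abs_nonneg _) (hx i) (by linarith)) (sq_nonneg _)
  calc (∑ i, |x i| ^ p) ^ (1 / p)
      ≤ ((∑ i, (x i) ^ 2) * M ^ (p - 2)) ^ (1 / p) :=
        Real.rpow_le_rpow (Finset.sum_nonneg fun i _ => by positivity) hsum (by positivity)
    _ = √(∑ i, (x i) ^ 2) ^ (2 / p) * M ^ (1 - 2 / p) := by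
        rw [Real.mul_rpow hS (by positivity), ← Real.rpow_mul hM, Real.sqrt_eq_rpow,
          ← Real.rpow_mul hS]
        congr 2 <;> field_simp

/-- The interpolation inequality from Remark 3:
`‖x‖_{ℓ^p} ≤ e^{-γp} ‖x‖_{ℓ^2} + e^{6γ} ‖x‖_{ℓ^∞}` for `p ≥ 3` and `γ ≥ 0`. -/
theorem lp_interpolation (γ : ℝ) (hγ : 0 ≤ γ) (p : ℝ) (hp : 3 ≤ p)
    (ι : Type) [Fintype ι] [Nonempty ι] (x : ι → ℝ) :
    (∑ i, |x i| ^ p) ^ (1 / p) ≤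
      Real.exp (-(γ * p)) * Real.sqrt (∑ i, (x i) ^ 2) +
        Real.exp (6 * γ) * ⨆ i, |x i| := by
  have hp0 : 0 < p := by linarith
  have hx : ∀ i, |x i| ≤ ⨆ i, |x i| := le_ciSup (Set.finite_range _).bddAbove
  have hM : 0 ≤ ⨆ i, |x i| := Real.iSup_nonneg fun i => abs_nonneg _
  refine (lp_le_l2_rpow_mul_bound_rpow x (by linarith) hM hx).trans ?_
  generalize (⨆ i, |x i|) = M at hM
  have hS : 0 ≤ √(∑ i, (x i) ^ 2) := Real.sqrt_nonneg _
  generalize √(∑ i, (x i) ^ 2) = S at hS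
  have hθ : 2 / p ≤ 1 := (div_le_one hp0).2 (by linarith)
  have hθ0 : 0 ≤ 2 / p := by positivity
  have hA : 0 ≤ Real.exp (-(γ * p)) * S := by positivity
  have hB : 0 ≤ Real.exp (6 * γ) * M := by positivity
  have hexp : 0 ≤ -(γ * p) * (2 / p) + 6 * γ * (1 - 2 / p) := by
    have h : -(γ * p) * (2 / p) + 6 * γ * (1 - 2 / p) = 4 * γ * (p - 3) / p := by
      field_simp
      ring
    rw [h]
    exact div_nonneg (mul_nonneg (by positivity) (by linarith)) hp0.le
  calc S ^ (2 / p) * M ^ (1 - 2 / p)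
      ≤ Real.exp (-(γ * p) * (2 / p) + 6 * γ * (1 - 2 / p)) *
          (S ^ (2 / p) * M ^ (1 - 2 / p)) :=
        le_mul_of_one_le_left (by positivity) (Real.one_le_exp hexp)
    _ = (Real.exp (-(γ * p)) * S) ^ (2 / p) * (Real.exp (6 * γ) * M) ^ (1 - 2 / p) := by
        rw [Real.mul_rpow (Real.exp_nonneg _) hS, Real.mul_rpow (Real.exp_nonneg _) hM,
          ← Real.exp_mul, ← Real.exp_mul, Real.exp_add]
        ring
    _ ≤ 2 / p * (Real.exp (-(γ * p)) * S) + (1 - 2 / p) * (Real.exp (6 * γ) * M) :=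
        Real.geom_mean_le_arith_mean2_weighted hθ0 (by linarith) hA hB (by ring)
    _ ≤ Real.exp (-(γ * p)) * S + Real.exp (6 * γ) * M :=
        add_le_add (mul_le_of_le_one_left hA hθ) (mul_le_of_le_one_left hB (by linarith))
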